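/- Let L₁, L₂ > 0 and let Ω = (0, L₁) × (0, L₂) ⊆ ℝ². Then for every continuously differentiable function f : ℝ² → ℝ with ∫_Ω f(x) dx = 0, one has ∫_Ω f(x)² dx ≤ (max(L₁, L₂)/π)² · ∫_Ω |∇f(x)|² dx, where |∇f| denotes the Euclidean norm of the gradient. -/

import Mathlib

open MeasureTheory

/-- The open rectangle `(0, L₁) × (0, L₂)` in `ℝ²`. -/
def rect (L₁ L₂ : ℝ) : Set (EuclideanSpace ℝ (Fin 2)) :=
  {x | x 0 ∈ Set.Ioo 0 L₁ ∧ x 1 ∈ Set.Ioo 0 L₂}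

lemma dirich (L k : ℝ) (hL : 0 < L) (hk : 0 < k) (hkL : k * L < Real.pi) (U u : ℝ → ℝ)
    (hU : ∀ x, HasDerivAt U (u x) x) (hu : Continuous u) (h0 : U 0 = 0) (h1 : U L = 0) :
    k ^ 2 * ∫ x in (0:ℝ)..L, U x ^ 2 ≤ ∫ x in (0:ℝ)..L, u x ^ 2 := by
  have hUc : Continuous U := continuous_iff_continuousAt.2 fun x => (hU x).continuousAt
  have hcos : ∀ x ∈ Set.uIcc 0 L, 0 < Real.cos (k * (x - L / 2)) := by
    intro x hx
    rw [Set.uIcc_of_le hL.le] at hx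
    apply Real.cos_pos_of_mem_Ioo
    constructor <;> nlinarith [hx.1, hx.2]
  set T : ℝ → ℝ := fun x => Real.tan (k * (x - L / 2)) with hT
  have hTc : ContinuousOn T (Set.uIcc 0 L) := by
    intro x hx
    have : ContinuousAt T x := by
      refine ContinuousAt.comp (g := Real.tan) (f := fun x => k * (x - L / 2)) ?_ (by fun_prop)
      exact Real.continuousAt_tan.2 (hcos x hx).ne'
    exact this.continuousWithinAt
  have hd : ∀ x ∈ Set.uIcc 0 L, HasDerivAt (fun x => k * (U x ^ 2 * T x))
      (k * (2 * U x * u x * T x + U x ^ 2 * (k * (1 + T x ^ 2)))) x := by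
    intro x hx
    have hc := (hcos x hx).ne'
    have h2 : HasDerivAt (fun x => k * (x - L / 2)) k x := by
      simpa using ((hasDerivAt_id x).sub_const (L/2)).const_mul k
    have h3 := (Real.hasDerivAt_tan hc).comp x h2
    have h4 := (((hU x).pow 2).mul h3).const_mul k
    have : 1 + T x ^ 2 = 1 / Real.cos (k * (x - L / 2)) ^ 2 := by
      simp only [hT, Real.tan_eq_sin_div_cos]
      rw [div_pow, eq_div_iff (pow_ne_zero 2 hc), add_mul, div_mul_cancel₀ _ (pow_ne_zero 2 hc)]
      linarith [Real.sin_sq_add_cos_sq (k * (x - L / 2))]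
    have h5 : k * (2 * U x * u x * T x + U x ^ 2 * (k * (1 + T x ^ 2))) = (k *
      ((2 : ℕ) * U x ^ (2 - 1) * u x * (Real.tan ∘ fun x => k * (x - L / 2)) x +
        (U ^ 2) x * (1 / Real.cos (k * (x - L / 2)) ^ 2 * k))) := by
      rw [this]
      simp only [hT, Function.comp_apply, Pi.pow_apply]
      push_cast
      ring
    rw [h5]
    exact h4
  have hUo := hUc.continuousOn (s := Set.uIcc 0 L)
  have huo := hu.continuousOn (s := Set.uIcc 0 L)
  have hI : ContinuousOn (fun x => k * (2 * U x * u x * T x + U x ^ 2 * (k * (1 + T x ^ 2)))) (Set.uIcc 0 L) := by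
    fun_prop
  have hint := intervalIntegral.integral_eq_sub_of_hasDerivAt hd hI.intervalIntegrable
  simp only [h0, h1] at hint
  have key : ∀ x, u x ^ 2 - k ^ 2 * U x ^ 2 + k * (2 * U x * u x * T x + U x ^ 2 * (k * (1 + T x ^ 2))) = (u x + k * U x * T x) ^ 2 := by
    intro x; ring
  have hpos : 0 ≤ ∫ x in (0:ℝ)..L, (u x ^ 2 - k ^ 2 * U x ^ 2 + k * (2 * U x * u x * T x + U x ^ 2 * (k * (1 + T x ^ 2)))) := by
    simp only [key]
    exact intervalIntegral.integral_nonneg hL.le fun x _ => sq_nonneg _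
  rw [intervalIntegral.integral_add (Continuous.intervalIntegrable (by fun_prop) _ _) hI.intervalIntegrable, hint,
    intervalIntegral.integral_sub (Continuous.intervalIntegrable (by fun_prop) _ _) (Continuous.intervalIntegrable (by fun_prop) _ _),
    intervalIntegral.integral_const_mul] at hpos
  linarith

lemma wirt0 (L k : ℝ) (hL : 0 < L) (hk : 0 < k) (hkL : k * L < Real.pi) (u v : ℝ → ℝ)
    (hu : ∀ x, HasDerivAt u (v x) x) (hv : Continuous v) (h0 : ∫ x in (0:ℝ)..L, u x = 0) :
    k ^ 2 * ∫ x in (0:ℝ)..L, u x ^ 2 ≤ ∫ x in (0:ℝ)..L, v x ^ 2 := by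
  have huc : Continuous u := continuous_iff_continuousAt.2 fun x => (hu x).continuousAt
  set U : ℝ → ℝ := fun x => ∫ t in (0:ℝ)..x, u t with hUdef
  have hU : ∀ x, HasDerivAt U (u x) x := fun x => huc.integral_hasStrictDerivAt 0 x |>.hasDerivAt
  have hUc : Continuous U := continuous_iff_continuousAt.2 fun x => (hU x).continuousAt
  have hU0 : U 0 = 0 := by simp [hUdef]
  have hUL : U L = 0 := h0
  have hD := dirich L k hL hk hkL U u hU huc hU0 hUL
  have hP := intervalIntegral.integral_eq_sub_of_hasDerivAt (a := 0) (b := L) (fun x _ => (hU x).mul (hu x))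
    (Continuous.intervalIntegrable (by fun_prop) _ _)
  simp only [Pi.mul_apply, hU0, hUL] at hP
  have hpos : 0 ≤ ∫ x in (0:ℝ)..L, (v x + k ^ 2 * U x) ^ 2 :=
    intervalIntegral.integral_nonneg hL.le fun x _ => sq_nonneg _
  have key : ∀ x, (v x + k ^ 2 * U x) ^ 2 = v x ^ 2 + 2 * k ^ 2 * (u x * u x + U x * v x) - 2 * k ^ 2 * u x ^ 2 + k ^ 4 * U x ^ 2 := by
    intro x; ring
  simp only [key] at hpos
  rw [intervalIntegral.integral_add, intervalIntegral.integral_sub, intervalIntegral.integral_add,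
    intervalIntegral.integral_const_mul, intervalIntegral.integral_const_mul, intervalIntegral.integral_const_mul, hP] at hpos
  · nlinarith [mul_le_mul_of_nonneg_left hD (sq_nonneg k)]
  all_goals exact Continuous.intervalIntegrable (by fun_prop) _ _

lemma wirt1 (L : ℝ) (hL : 0 < L) (u v : ℝ → ℝ)
    (hu : ∀ x, HasDerivAt u (v x) x) (hv : Continuous v) (h0 : ∫ x in (0:ℝ)..L, u x = 0) :
    ∫ x in (0:ℝ)..L, u x ^ 2 ≤ (L / Real.pi) ^ 2 * ∫ x in (0:ℝ)..L, v x ^ 2 := by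
  have hpi := Real.pi_pos
  have h : (Real.pi / L) ^ 2 * ∫ x in (0:ℝ)..L, u x ^ 2 ≤ ∫ x in (0:ℝ)..L, v x ^ 2 := by
    have hc : ContinuousWithinAt (fun k : ℝ => k ^ 2 * ∫ x in (0:ℝ)..L, u x ^ 2) (Set.Iio (Real.pi / L)) (Real.pi / L) :=
      Continuous.continuousWithinAt (by fun_prop)
    refine le_of_tendsto hc ?_
    filter_upwards [Ioo_mem_nhdsLT (show 0 < Real.pi / L by positivity)] with k hk
    exact wirt0 L k hL hk.1 ((lt_div_iff₀ hL).1 hk.2) u v hu hv h0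
  calc ∫ x in (0:ℝ)..L, u x ^ 2 = (L / Real.pi) ^ 2 * ((Real.pi / L) ^ 2 * ∫ x in (0:ℝ)..L, u x ^ 2) := by
        field_simp
    _ ≤ _ := by gcongr

lemma wirt2 (L : ℝ) (hL : 0 < L) (u v : ℝ → ℝ)
    (hu : ∀ x, HasDerivAt u (v x) x) (hv : Continuous v) :
    ∫ x in (0:ℝ)..L, u x ^ 2 ≤ (L / Real.pi) ^ 2 * (∫ x in (0:ℝ)..L, v x ^ 2) + (∫ x in (0:ℝ)..L, u x) ^ 2 / L := by
  have huc : Continuous u := continuous_iff_continuousAt.2 fun x => (hu x).continuousAt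
  set m := (∫ x in (0:ℝ)..L, u x) with hm
  have h := wirt1 L hL (fun x => u x - m / L) v (fun x => (hu x).sub_const _) hv (by
    rw [intervalIntegral.integral_sub (huc.intervalIntegrable _ _) (by simp), ← hm]
    simp; field_simp; simp)
  have key : ∀ x, (u x - m / L) ^ 2 = u x ^ 2 - 2 * (m / L) * u x + (m / L) ^ 2 := by intro x; ring
  simp only [key] at h
  rw [intervalIntegral.integral_add, intervalIntegral.integral_sub, intervalIntegral.integral_const_mul, ← hm] at h
  · simp at h
    have : L * (m / L) ^ 2 = m ^ 2 / L := by field_simp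
    have h2 : 2 * (m / L) * m = 2 * (m ^ 2 / L) := by field_simp
    linarith
  all_goals exact Continuous.intervalIntegrable (by fun_prop) _ _

/-- Cauchy-Schwarz -/
lemma cs1 (L : ℝ) (hL : 0 < L) (u : ℝ → ℝ) (huc : Continuous u) :
    (∫ x in (0:ℝ)..L, u x) ^ 2 ≤ L * ∫ x in (0:ℝ)..L, u x ^ 2 := by
  set m := (∫ x in (0:ℝ)..L, u x) with hm
  have h : 0 ≤ ∫ x in (0:ℝ)..L, (u x - m / L) ^ 2 :=
    intervalIntegral.integral_nonneg hL.le fun x _ => sq_nonneg _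
  have key : ∀ x, (u x - m / L) ^ 2 = u x ^ 2 - 2 * (m / L) * u x + (m / L) ^ 2 := by intro x; ring
  simp only [key] at h
  rw [intervalIntegral.integral_add, intervalIntegral.integral_sub, intervalIntegral.integral_const_mul, ← hm] at h
  · simp at h
    have : L * (m / L) ^ 2 = m ^ 2 / L := by field_simp
    have h2 : 2 * (m / L) * m = 2 * (m ^ 2 / L) := by field_simp
    have h3 : m ^ 2 / L ≤ ∫ x in (0:ℝ)..L, u x ^ 2 := by linarith
    rw [div_le_iff₀ hL] at h3
    linarith
  all_goals exact Continuous.intervalIntegrable (by fun_prop) _ _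

lemma deriv_under (L : ℝ) (F G : ℝ → ℝ → ℝ)
    (hF : Continuous (Function.uncurry F)) (hG : Continuous (Function.uncurry G))
    (hFG : ∀ a b, HasDerivAt (fun a => F a b) (G a b) a) (a : ℝ) :
    HasDerivAt (fun a => ∫ b in (0:ℝ)..L, F a b) (∫ b in (0:ℝ)..L, G a b) a := by
  obtain ⟨C, hC⟩ := ((isCompact_Icc (a := a - 1) (b := a + 1)).prod
    (isCompact_uIcc (a := (0:ℝ)) (b := L))).exists_bound_of_continuousOn hG.continuousOn
  have hFc : ∀ a, Continuous (F a) := fun a => hF.comp (by fun_prop : Continuous fun b => (a, b))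
  have hGc : ∀ a, Continuous (G a) := fun a => hG.comp (by fun_prop : Continuous fun b => (a, b))
  refine (intervalIntegral.hasDerivAt_integral_of_dominated_loc_of_deriv_le (bound := fun _ => C)
    (Icc_mem_nhds (show a - 1 < a by linarith) (show a < a + 1 by linarith))
    (Filter.Eventually.of_forall fun a => (hFc a).aestronglyMeasurable)
    ((hFc a).intervalIntegrable _ _) (hGc a).aestronglyMeasurable
    (Filter.Eventually.of_forall fun b hb x hx => hC (x, b) ⟨hx, Set.uIoc_subset_uIcc hb⟩)
    (by simp) (Filter.Eventually.of_forall fun b hb x hx => hFG x b)).2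

lemma poinc2 (L₁ L₂ : ℝ) (hL₁ : 0 < L₁) (hL₂ : 0 < L₂) (F G H : ℝ → ℝ → ℝ)
    (hF : Continuous (Function.uncurry F)) (hG : Continuous (Function.uncurry G))
    (hH : Continuous (Function.uncurry H))
    (hFG : ∀ a b, HasDerivAt (fun a => F a b) (G a b) a)
    (hFH : ∀ a b, HasDerivAt (fun b => F a b) (H a b) b)
    (h0 : ∫ a in (0:ℝ)..L₁, ∫ b in (0:ℝ)..L₂, F a b = 0) :
    ∫ a in (0:ℝ)..L₁, ∫ b in (0:ℝ)..L₂, F a b ^ 2 ≤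
      (max L₁ L₂ / Real.pi) ^ 2 * ∫ a in (0:ℝ)..L₁, ∫ b in (0:ℝ)..L₂, (G a b ^ 2 + H a b ^ 2) := by
  have hpi := Real.pi_pos
  have hGc : ∀ a, Continuous (G a) := fun a => hG.comp (by fun_prop : Continuous fun b => (a, b))
  have hHc : ∀ a, Continuous (H a) := fun a => hH.comp (by fun_prop : Continuous fun b => (a, b))
  have hF2 : Continuous fun a => ∫ b in (0:ℝ)..L₂, F a b ^ 2 :=
    intervalIntegral.continuous_parametric_intervalIntegral_of_continuous' (hF.pow 2) _ _
  have hG2 : Continuous fun a => ∫ b in (0:ℝ)..L₂, G a b ^ 2 :=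
    intervalIntegral.continuous_parametric_intervalIntegral_of_continuous' (hG.pow 2) _ _
  have hH2 : Continuous fun a => ∫ b in (0:ℝ)..L₂, H a b ^ 2 :=
    intervalIntegral.continuous_parametric_intervalIntegral_of_continuous' (hH.pow 2) _ _
  have hF1 : Continuous fun a => ∫ b in (0:ℝ)..L₂, F a b :=
    intervalIntegral.continuous_parametric_intervalIntegral_of_continuous' hF _ _
  have hG1 : Continuous fun a => ∫ b in (0:ℝ)..L₂, G a b :=
    intervalIntegral.continuous_parametric_intervalIntegral_of_continuous' hG _ _
  have s1 : ∫ a in (0:ℝ)..L₁, ∫ b in (0:ℝ)..L₂, F a b ^ 2 ≤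
      ∫ a in (0:ℝ)..L₁, ((L₂ / Real.pi) ^ 2 * (∫ b in (0:ℝ)..L₂, H a b ^ 2)
        + (∫ b in (0:ℝ)..L₂, F a b) ^ 2 / L₂) := by
    apply intervalIntegral.integral_mono_on hL₁.le
    · exact hF2.intervalIntegrable _ _
    · exact Continuous.intervalIntegrable (by fun_prop) _ _
    · intro a _
      exact wirt2 L₂ hL₂ (F a) (H a) (hFH a) (hHc a)
  rw [intervalIntegral.integral_add (Continuous.intervalIntegrable (by fun_prop) _ _)
    (Continuous.intervalIntegrable (by fun_prop) _ _), intervalIntegral.integral_const_mul,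
    intervalIntegral.integral_div] at s1
  have s2 := wirt1 L₁ hL₁ _ _ (deriv_under L₂ F G hF hG hFG) hG1 h0
  have s3 : ∫ a in (0:ℝ)..L₁, (∫ b in (0:ℝ)..L₂, G a b) ^ 2 ≤
      ∫ a in (0:ℝ)..L₁, L₂ * ∫ b in (0:ℝ)..L₂, G a b ^ 2 := by
    apply intervalIntegral.integral_mono_on hL₁.le
    · exact Continuous.intervalIntegrable (by fun_prop) _ _
    · exact Continuous.intervalIntegrable (by fun_prop) _ _
    · intro a _
      exact cs1 L₂ hL₂ (G a) (hGc a)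
  rw [intervalIntegral.integral_const_mul] at s3
  have s4 : ∫ a in (0:ℝ)..L₁, ∫ b in (0:ℝ)..L₂, (G a b ^ 2 + H a b ^ 2) =
      (∫ a in (0:ℝ)..L₁, ∫ b in (0:ℝ)..L₂, G a b ^ 2) + ∫ a in (0:ℝ)..L₁, ∫ b in (0:ℝ)..L₂, H a b ^ 2 := by
    rw [← intervalIntegral.integral_add (hG2.intervalIntegrable _ _) (hH2.intervalIntegrable _ _)]
    congr 1
    ext a
    exact intervalIntegral.integral_add (((hGc a).pow 2).intervalIntegrable _ _)
      (((hHc a).pow 2).intervalIntegrable _ _)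
  rw [s4, mul_add]
  have nG : 0 ≤ ∫ a in (0:ℝ)..L₁, ∫ b in (0:ℝ)..L₂, G a b ^ 2 :=
    intervalIntegral.integral_nonneg hL₁.le fun a _ =>
      intervalIntegral.integral_nonneg hL₂.le fun b _ => sq_nonneg _
  have nH : 0 ≤ ∫ a in (0:ℝ)..L₁, ∫ b in (0:ℝ)..L₂, H a b ^ 2 :=
    intervalIntegral.integral_nonneg hL₁.le fun a _ =>
      intervalIntegral.integral_nonneg hL₂.le fun b _ => sq_nonneg _
  have e1 : (∫ a in (0:ℝ)..L₁, (∫ b in (0:ℝ)..L₂, F a b) ^ 2) / L₂ ≤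
      (L₁ / Real.pi) ^ 2 * ∫ a in (0:ℝ)..L₁, ∫ b in (0:ℝ)..L₂, G a b ^ 2 := by
    rw [div_le_iff₀ hL₂]
    refine s2.trans ((mul_le_mul_of_nonneg_left s3 (by positivity)).trans (le_of_eq (by ring)))
  have m1 : (L₁ / Real.pi) ^ 2 ≤ (max L₁ L₂ / Real.pi) ^ 2 := by
    gcongr; exact le_max_left _ _
  have m2 : (L₂ / Real.pi) ^ 2 ≤ (max L₁ L₂ / Real.pi) ^ 2 := by
    gcongr; exact le_max_right _ _
  have q1 := mul_le_mul_of_nonneg_right m1 nG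
  have q2 := mul_le_mul_of_nonneg_right m2 nH
  linarith

lemma rect_integral (L₁ L₂ : ℝ) (hL₁ : 0 < L₁) (hL₂ : 0 < L₂)
    (g : EuclideanSpace ℝ (Fin 2) → ℝ) (hg : Continuous g) :
    ∫ x in rect L₁ L₂, g x = ∫ a in (0:ℝ)..L₁, ∫ b in (0:ℝ)..L₂, g !₂[a, b] := by
  have mp : MeasurePreserving (fun p : ℝ × ℝ => (!₂[p.1, p.2] : EuclideanSpace ℝ (Fin 2))) :=
    (PiLp.volume_preserving_toLp (Fin 2)).comp ((volume_preserving_finTwoArrow ℝ).symm _)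
  have me : MeasurableEmbedding (fun p : ℝ × ℝ => (!₂[p.1, p.2] : EuclideanSpace ℝ (Fin 2))) :=
    (MeasurableEquiv.toLp 2 (Fin 2 → ℝ)).measurableEmbedding.comp
      (MeasurableEquiv.finTwoArrow (α := ℝ)).symm.measurableEmbedding
  rw [← mp.setIntegral_preimage_emb me]
  have hpre : (fun p : ℝ × ℝ => (!₂[p.1, p.2] : EuclideanSpace ℝ (Fin 2))) ⁻¹' rect L₁ L₂ =
      Set.Ioo 0 L₁ ×ˢ Set.Ioo 0 L₂ := by
    ext p
    simp [rect]
  have hc : Continuous fun p : ℝ × ℝ => g !₂[p.1, p.2] := hg.comp (by fun_prop)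
  rw [hpre, Measure.volume_eq_prod, setIntegral_prod]
  · simp only [intervalIntegral.integral_of_le hL₁.le, intervalIntegral.integral_of_le hL₂.le,
      integral_Ioc_eq_integral_Ioo]
  · exact (hc.continuousOn.integrableOn_compact (isCompact_Icc.prod isCompact_Icc)).mono_set
      (Set.prod_mono Set.Ioo_subset_Icc_self Set.Ioo_subset_Icc_self)

/-- Poincaré–Wirtinger inequality with the optimal constant `max(L₁, L₂)/π` for mean-zero
`C¹` functions on the rectangle `Ω = (0, L₁) × (0, L₂)`. -/
theorem stmt_15 (L₁ L₂ : ℝ) (hL₁ : 0 < L₁) (hL₂ : 0 < L₂) :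
    ∀ f : EuclideanSpace ℝ (Fin 2) → ℝ, ContDiff ℝ 1 f →
      (∫ x in rect L₁ L₂, f x) = 0 →
      (∫ x in rect L₁ L₂, f x ^ 2) ≤
        (max L₁ L₂ / Real.pi) ^ 2 * ∫ x in rect L₁ L₂, ‖fderiv ℝ f x‖ ^ 2 := by
  intro f hf h0
  have hfc := hf.continuous
  have hD : Continuous (fderiv ℝ f) := hf.continuous_fderiv one_ne_zero
  have hd : ∀ x, HasFDerivAt f (fderiv ℝ f x) x := fun x =>
    (hf.differentiable one_ne_zero x).hasFDerivAt
  set e₁ : EuclideanSpace ℝ (Fin 2) := !₂[1, 0] with he₁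
  set e₂ : EuclideanSpace ℝ (Fin 2) := !₂[0, 1] with he₂
  have hpt : ∀ a b : ℝ, (!₂[a, b] : EuclideanSpace ℝ (Fin 2)) = a • e₁ + b • e₂ := by
    intro a b
    ext i
    fin_cases i <;> simp [he₁, he₂]
  have hG : Continuous fun x => fderiv ℝ f x e₁ := hD.clm_apply continuous_const
  have hH : Continuous fun x => fderiv ℝ f x e₂ := hD.clm_apply continuous_const
  have hp : Continuous fun p : ℝ × ℝ => (!₂[p.1, p.2] : EuclideanSpace ℝ (Fin 2)) := by fun_prop
  rw [rect_integral L₁ L₂ hL₁ hL₂ f hfc] at h0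
  have main := poinc2 L₁ L₂ hL₁ hL₂ (fun a b => f !₂[a, b]) (fun a b => fderiv ℝ f !₂[a, b] e₁)
    (fun a b => fderiv ℝ f !₂[a, b] e₂) (hfc.comp hp) (hG.comp hp) (hH.comp hp)
    (by
      intro a b
      have h1 : HasDerivAt (fun a : ℝ => (!₂[a, b] : EuclideanSpace ℝ (Fin 2))) e₁ a := by
        simp only [hpt]
        simpa using ((hasDerivAt_id a).smul_const e₁).add_const (b • e₂)
      exact (hd !₂[a, b]).comp_hasDerivAt a h1)
    (by
      intro a b
      have h1 : HasDerivAt (fun b : ℝ => (!₂[a, b] : EuclideanSpace ℝ (Fin 2))) e₂ b := by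
        simp only [hpt]
        simpa using ((hasDerivAt_id b).smul_const e₂).const_add (a • e₁)
      exact (hd !₂[a, b]).comp_hasDerivAt b h1)
    h0
  have hGH : Continuous fun x => (fderiv ℝ f x e₁) ^ 2 + (fderiv ℝ f x e₂) ^ 2 :=
    (hG.pow 2).add (hH.pow 2)
  rw [← rect_integral L₁ L₂ hL₁ hL₂ (fun x => f x ^ 2) (hfc.pow 2),
    ← rect_integral L₁ L₂ hL₁ hL₂ _ hGH] at main
  refine main.trans (mul_le_mul_of_nonneg_left ?_ (by positivity))
  have hN : Continuous fun x => ‖fderiv ℝ f x‖ ^ 2 := hD.norm.pow 2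
  rw [rect_integral L₁ L₂ hL₁ hL₂ _ hGH, rect_integral L₁ L₂ hL₁ hL₂ _ hN]
  have hle : ∀ x, (fderiv ℝ f x e₁) ^ 2 + (fderiv ℝ f x e₂) ^ 2 ≤ ‖fderiv ℝ f x‖ ^ 2 := by
    intro x
    set A := fderiv ℝ f x e₁
    set B := fderiv ℝ f x e₂
    have h1 : fderiv ℝ f x !₂[A, B] = A ^ 2 + B ^ 2 := by
      rw [hpt, map_add, map_smul, map_smul]
      simp only [smul_eq_mul]
      ring
    have h2 := (fderiv ℝ f x).le_opNorm !₂[A, B]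
    have h3 : ‖(!₂[A, B] : EuclideanSpace ℝ (Fin 2))‖ ^ 2 = A ^ 2 + B ^ 2 := by
      rw [EuclideanSpace.norm_sq_eq]
      simp
    rw [h1, ← h3, Real.norm_of_nonneg (sq_nonneg _)] at h2
    rw [← h3]
    rcases eq_or_lt_of_le (norm_nonneg (!₂[A, B] : EuclideanSpace ℝ (Fin 2))) with h | h
    · rw [← h]; nlinarith [sq_nonneg ‖fderiv ℝ f x‖]
    · have : ‖(!₂[A, B] : EuclideanSpace ℝ (Fin 2))‖ ≤ ‖fderiv ℝ f x‖ := by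
        rw [sq] at h2
        exact le_of_mul_le_mul_right h2 h
      gcongr
  have c1 := hGH.comp hp
  have c2 := hN.comp hp
  apply intervalIntegral.integral_mono_on hL₁.le
  · exact (intervalIntegral.continuous_parametric_intervalIntegral_of_continuous'
      (f := fun a b : ℝ => (fderiv ℝ f !₂[a, b] e₁) ^ 2 + (fderiv ℝ f !₂[a, b] e₂) ^ 2) c1 _ _).intervalIntegrable _ _
  · exact (intervalIntegral.continuous_parametric_intervalIntegral_of_continuous'
      (f := fun a b : ℝ => ‖fderiv ℝ f !₂[a, b]‖ ^ 2) c2 _ _).intervalIntegrable _ _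
  · intro a _
    apply intervalIntegral.integral_mono_on hL₂.le
    · exact (c1.comp (by fun_prop : Continuous fun b : ℝ => (a, b))).intervalIntegrable _ _
    · exact (c2.comp (by fun_prop : Continuous fun b : ℝ => (a, b))).intervalIntegrable _ _
    · intro b _
      exact hle _
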